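/- Subject reduction, part one: if Γ ⊢ M₁ is derivable and M₁ → M₂ is a one-step λπ-reduction of terms, then Γ ⊢ M₂ is derivable; and if Γ ⊢ s₁ ▷ Δ is derivable and s₁ → s₂ is a one-step λπ-reduction of substitutions, then Γ ⊢ s₂ ▷ Δ is derivable. -/

import Mathlib

/- Named terms and substitutions of the λπ-calculus. Variables are natural numbers. -/
mutual
inductive Tm : Type
  | var : ℕ → Tm
  | app : Tm → Tm → Tm
  | lam : ℕ → Tm → Tm
  | clos : Subst → Tm → Tm
inductive Subst : Type
  | id : Subst
  | pi : ℕ → Subst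
  | cons : Subst → Tm → ℕ → Subst
  | comp : Subst → Subst → Subst
end

/- Contexts are lists of variables; the head of the list is the *rightmost* variable,
so the context `Γ, a` of the paper is `a :: Γ`. -/
mutual
/-- `WfTm Γ M` is the judgement `Γ ⊢ M`. -/
inductive WfTm : List ℕ → Tm → Prop
  | var (Γ : List ℕ) (a : ℕ) : WfTm (a :: Γ) (.var a)
  | weak {Γ : List ℕ} {a : ℕ} (b : ℕ) : a ≠ b → WfTm Γ (.var a) → WfTm (b :: Γ) (.var a)
  | app {Γ M N} : WfTm Γ M → WfTm Γ N → WfTm Γ (.app M N)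
  | lam {Γ a M} : WfTm (a :: Γ) M → WfTm Γ (.lam a M)
  | clos {Γ s Δ M} : WfSub Γ s Δ → WfTm Δ M → WfTm Γ (.clos s M)
/-- `WfSub Γ s Δ` is the judgement `Γ ⊢ s ▷ Δ`. -/
inductive WfSub : List ℕ → Subst → List ℕ → Prop
  | id (Γ) : WfSub Γ .id Γ
  | pi (Γ a) : WfSub (a :: Γ) (.pi a) Γ
  | cons {Γ s Δ N} (a) : WfSub Γ s Δ → WfTm Γ N → WfSub Γ (.cons s N a) (a :: Δ)
  | comp {Γ s Δ q Θ} : WfSub Γ s Δ → WfSub Δ q Θ → WfSub Γ (.comp s q) Θ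
end

/-- The operator `O_{λa}` on sequences of finite sets (sequences are 0-indexed:
index `n` corresponds to the paper's index `n+1`). -/
def Olam (a : ℕ) (A : ℕ → Finset ℕ) : ℕ → Finset ℕ
  | 0 => (A 0).erase a ∪ A 1
  | n + 1 => A (n + 2)

/-- The operator `O_π`. -/
def Opi (A : ℕ → Finset ℕ) : ℕ → Finset ℕ
  | 0 => ∅
  | n + 1 => A n

mutual
/-- The free-variable sequence of a term: `FV M n` is the paper's `FV_{n+1}(M)`. -/
def FV : Tm → ℕ → Finset ℕ
  | .var a => fun n => if n = 0 then {a} else ∅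
  | .app M N => fun n => FV M n ∪ FV N n
  | .lam a M => Olam a (FV M)
  | .clos s M => Osub s (FV M)
/-- The operator `O_s` associated with a substitution `s`. -/
def Osub : Subst → (ℕ → Finset ℕ) → (ℕ → Finset ℕ)
  | .id => fun A => A
  | .pi _ => fun A => Opi A
  | .cons s N a => fun A n => Osub s (Olam a A) n ∪ FV N n
  | .comp s q => fun A => Osub s (Osub q A)
end

/-- Iterated abstraction `λΓ.M` (recall the head of the list is the rightmost variable). -/
def lamCtx : List ℕ → Tm → Tm
  | [], M => M
  | a :: Γ, M => lamCtx Γ (.lam a M)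

/-- Free variables of a judgement: `FV(Γ ⊢ M) = FV(λΓ.M)`. -/
def FVJ (Γ : List ℕ) (M : Tm) : ℕ → Finset ℕ := FV (lamCtx Γ M)

/-- Iterated lifting `⇑_Δ(s)`. -/
def Uparrow : List ℕ → Subst → Subst
  | [], s => s
  | a :: Δ, s => .cons (.comp (.pi a) (Uparrow Δ s)) (.var a) a

/- One-step reduction of the λπ-calculus (compatible closure).  The Boolean
parameter tells whether the rule `Beta` is allowed: `StepTm true` is λπ-reduction,
`StepTm false` is σπα-reduction. -/
mutual
inductive StepTm : Bool → Tm → Tm → Prop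
  | beta {a : ℕ} {M N : Tm} :
      StepTm true (.app (.lam a M) N) (.clos (.cons .id N a) M)
  | abs {β : Bool} {s : Subst} {a : ℕ} {M : Tm} :
      StepTm β (.clos s (.lam a M))
        (.lam a (.clos (.cons (.comp (.pi a) s) (.var a) a) M))
  | app {β : Bool} {s : Subst} {M N : Tm} :
      StepTm β (.clos s (.app M N)) (.app (.clos s M) (.clos s N))
  | consVar {β : Bool} {s : Subst} {N : Tm} {a : ℕ} :
      StepTm β (.clos (.cons s N a) (.var a)) N
  | new {β : Bool} {s : Subst} {N : Tm} {a b : ℕ} : a ≠ b →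
      StepTm β (.clos (.cons s N a) (.var b)) (.clos s (.var b))
  | idVar {β : Bool} {a : ℕ} : StepTm β (.clos .id (.var a)) (.var a)
  | clos {β : Bool} {s q : Subst} {M : Tm} :
      StepTm β (.clos s (.clos q M)) (.clos (.comp s q) M)
  | pi1 {β : Bool} {a b : ℕ} : a ≠ b → StepTm β (.clos (.pi a) (.var b)) (.var b)
  | pi2 {β : Bool} {s : Subst} {a b : ℕ} : a ≠ b →
      StepTm β (.clos (.comp s (.pi a)) (.var b)) (.clos s (.var b))
  | alpha1 {β : Bool} {a b : ℕ} {M : Tm} :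
      (∃ i, a ∈ FV (.lam a M) i) → (∀ i, b ∉ FV (.lam a M) i) →
      StepTm β (.lam a M) (.lam b (.clos (.cons (.pi b) (.var b) a) M))
  | lamCong {β : Bool} {a : ℕ} {M₁ M₂ : Tm} :
      StepTm β M₁ M₂ → StepTm β (.lam a M₁) (.lam a M₂)
  | appL {β : Bool} {M₁ M₂ N : Tm} : StepTm β M₁ M₂ → StepTm β (.app M₁ N) (.app M₂ N)
  | appR {β : Bool} {M N₁ N₂ : Tm} : StepTm β N₁ N₂ → StepTm β (.app M N₁) (.app M N₂)
  | closL {β : Bool} {s₁ s₂ : Subst} {M : Tm} :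
      StepSub β s₁ s₂ → StepTm β (.clos s₁ M) (.clos s₂ M)
  | closR {β : Bool} {s : Subst} {M₁ M₂ : Tm} :
      StepTm β M₁ M₂ → StepTm β (.clos s M₁) (.clos s M₂)
inductive StepSub : Bool → Subst → Subst → Prop
  | ass {β : Bool} {s q r : Subst} :
      StepSub β (.comp s (.comp q r)) (.comp (.comp s q) r)
  | idR {β : Bool} {s : Subst} : StepSub β (.comp s .id) s
  | idShift {β : Bool} {a : ℕ} : StepSub β (.comp .id (.pi a)) (.pi a)
  | consShift {β : Bool} {s : Subst} {N : Tm} {a : ℕ} :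
      StepSub β (.comp (.cons s N a) (.pi a)) s
  | map {β : Bool} {s q : Subst} {N : Tm} {a : ℕ} :
      StepSub β (.comp s (.cons q N a)) (.cons (.comp s q) (.clos s N) a)
  | consL {β : Bool} {s₁ s₂ : Subst} {N : Tm} {a : ℕ} :
      StepSub β s₁ s₂ → StepSub β (.cons s₁ N a) (.cons s₂ N a)
  | consR {β : Bool} {s : Subst} {N₁ N₂ : Tm} {a : ℕ} :
      StepTm β N₁ N₂ → StepSub β (.cons s N₁ a) (.cons s N₂ a)
  | compL {β : Bool} {s₁ s₂ q : Subst} :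
      StepSub β s₁ s₂ → StepSub β (.comp s₁ q) (.comp s₂ q)
  | compR {β : Bool} {s q₁ q₂ : Subst} :
      StepSub β q₁ q₂ → StepSub β (.comp s q₁) (.comp s q₂)
end

/-- One-step reduction `⇝` on judgements `Γ ⊢ M`, including the rule `α₂`.
`StepJ true` is λπ, `StepJ false` is σπα. -/
inductive StepJ (β : Bool) : List ℕ × Tm → List ℕ × Tm → Prop
  | step {Γ : List ℕ} {M₁ M₂ : Tm} : StepTm β M₁ M₂ → StepJ β (Γ, M₁) (Γ, M₂)
  | alpha2 {Γ Δ : List ℕ} {a b : ℕ} {M : Tm} :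
      (∃ i, a ∈ FVJ (Δ ++ [a]) M i) → (∀ i, b ∉ FVJ (Δ ++ [a]) M i) →
      StepJ β (Δ ++ a :: Γ, M)
        (Δ ++ b :: Γ, .clos (Uparrow Δ (.cons (.pi b) (.var b) a)) M)

/- Name-free (de Bruijn) terms and substitutions. -/
mutual
inductive NTm : Type
  | one : NTm
  | app : NTm → NTm → NTm
  | lam : NTm → NTm
  | clos : NSub → NTm → NTm
inductive NSub : Type
  | id : NSub
  | pi : NSub
  | cons : NSub → NTm → NSub
  | comp : NSub → NSub → NSub
end

/-- `piIter n` is the left-nested composition of `n+1` copies of `π`. -/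
def piIter : ℕ → NSub
  | 0 => .pi
  | k + 1 => .comp (piIter k) .pi

/-- `dbr n` is the de Bruijn index `n+1̲`: `dbr 0 = 1` and
`dbr (n+1) = ((…(π∘π)∘…)∘π)∘1` with `n+1` occurrences of `π`. -/
def dbr : ℕ → NTm
  | 0 => .one
  | n + 1 => .clos (piIter n) .one

/- One-step reduction of λσ (`NStepTm true`) resp. σ (`NStepTm false`)
on name-free terms/substitutions. -/
mutual
inductive NStepTm : Bool → NTm → NTm → Prop
  | beta {U V : NTm} : NStepTm true (.app (.lam U) V) (.clos (.cons .id V) U)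
  | abs {β : Bool} {u : NSub} {U : NTm} :
      NStepTm β (.clos u (.lam U)) (.lam (.clos (.cons (.comp .pi u) .one) U))
  | app {β : Bool} {u : NSub} {U V : NTm} :
      NStepTm β (.clos u (.app U V)) (.app (.clos u U) (.clos u V))
  | consVar {β : Bool} {u : NSub} {V : NTm} : NStepTm β (.clos (.cons u V) .one) V
  | idVar {β : Bool} : NStepTm β (.clos .id .one) .one
  | clos {β : Bool} {u v : NSub} {U : NTm} :
      NStepTm β (.clos u (.clos v U)) (.clos (.comp u v) U)
  | lamCong {β : Bool} {U₁ U₂ : NTm} : NStepTm β U₁ U₂ → NStepTm β (.lam U₁) (.lam U₂)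
  | appL {β : Bool} {U₁ U₂ V : NTm} : NStepTm β U₁ U₂ → NStepTm β (.app U₁ V) (.app U₂ V)
  | appR {β : Bool} {U V₁ V₂ : NTm} : NStepTm β V₁ V₂ → NStepTm β (.app U V₁) (.app U V₂)
  | closL {β : Bool} {u₁ u₂ : NSub} {U : NTm} :
      NStepSub β u₁ u₂ → NStepTm β (.clos u₁ U) (.clos u₂ U)
  | closR {β : Bool} {u : NSub} {U₁ U₂ : NTm} :
      NStepTm β U₁ U₂ → NStepTm β (.clos u U₁) (.clos u U₂)
inductive NStepSub : Bool → NSub → NSub → Prop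
  | ass {β : Bool} {u v w : NSub} : NStepSub β (.comp u (.comp v w)) (.comp (.comp u v) w)
  | idR {β : Bool} {u : NSub} : NStepSub β (.comp u .id) u
  | idShift {β : Bool} : NStepSub β (.comp .id .pi) .pi
  | consShift {β : Bool} {u : NSub} {V : NTm} : NStepSub β (.comp (.cons u V) .pi) u
  | map {β : Bool} {u v : NSub} {V : NTm} :
      NStepSub β (.comp u (.cons v V)) (.cons (.comp u v) (.clos u V))
  | consL {β : Bool} {u₁ u₂ : NSub} {V : NTm} :
      NStepSub β u₁ u₂ → NStepSub β (.cons u₁ V) (.cons u₂ V)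
  | consR {β : Bool} {u : NSub} {V₁ V₂ : NTm} :
      NStepTm β V₁ V₂ → NStepSub β (.cons u V₁) (.cons u V₂)
  | compL {β : Bool} {u₁ u₂ v : NSub} :
      NStepSub β u₁ u₂ → NStepSub β (.comp u₁ v) (.comp u₂ v)
  | compR {β : Bool} {u v₁ v₂ : NSub} :
      NStepSub β v₁ v₂ → NStepSub β (.comp u v₁) (.comp u v₂)
end

/- The correspondence `(Γ ⊢ M) ⟹ U` resp. `(Γ ⊢ s ▷ Δ) ⟹ u` between judgements and
name-free terms/substitutions (Definition 7.6 of the paper). -/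
mutual
inductive TrTm : List ℕ → Tm → NTm → Prop
  | var (Γ : List ℕ) (a : ℕ) : TrTm (a :: Γ) (.var a) (dbr 0)
  | weak {Γ : List ℕ} {a : ℕ} {n : ℕ} (b : ℕ) : a ≠ b →
      TrTm Γ (.var a) (dbr n) → TrTm (b :: Γ) (.var a) (dbr (n + 1))
  | app {Γ M N U V} : TrTm Γ M U → TrTm Γ N V → TrTm Γ (.app M N) (.app U V)
  | lam {Γ a M U} : TrTm (a :: Γ) M U → TrTm Γ (.lam a M) (.lam U)
  | clos {Γ s Δ M u U} : TrSub Γ s Δ u → TrTm Δ M U → TrTm Γ (.clos s M) (.clos u U)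
inductive TrSub : List ℕ → Subst → List ℕ → NSub → Prop
  | id (Γ) : TrSub Γ .id Γ .id
  | pi (Γ a) : TrSub (a :: Γ) (.pi a) Γ .pi
  | cons {Γ s Δ N u V} (a) : TrSub Γ s Δ u → TrTm Γ N V →
      TrSub Γ (.cons s N a) (a :: Δ) (.cons u V)
  | comp {Γ s Δ q Θ u v} : TrSub Γ s Δ u → TrSub Δ q Θ v →
      TrSub Γ (.comp s q) Θ (.comp u v)
end

/-! Apart from variables the typing rules are syntax-directed, so inverting the derivation of a
redex supplies the premises from which its contractum is derived. What remains are the substitutions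
that the rules `Beta`, `Abs` and `α₁` create, and, for the rules acting on a variable, the fact that
weakening by a different variable is invertible. -/

theorem wfTm_cons_var_iff_of_ne {Γ : List ℕ} {a b : ℕ} (hab : a ≠ b) :
    WfTm (a :: Γ) (.var b) ↔ WfTm Γ (.var b) := by
  refine ⟨fun h => ?_, .weak a hab.symm⟩
  cases h with
  | var => exact absurd rfl hab
  | weak _ _ hb => exact hb

namespace WfSub

variable {Γ Δ : List ℕ} {s : Subst}

theorem single {N : Tm} (a : ℕ) (hN : WfTm Γ N) : WfSub Γ (.cons .id N a) (a :: Γ) :=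
  .cons a (.id Γ) hN

theorem lift (a : ℕ) (hs : WfSub Γ s Δ) :
    WfSub (a :: Γ) (.cons (.comp (.pi a) s) (.var a) a) (a :: Δ) :=
  .cons a (.comp (.pi Γ a) hs) (.var Γ a)

theorem rename (Γ : List ℕ) (a b : ℕ) : WfSub (b :: Γ) (.cons (.pi b) (.var b) a) (a :: Γ) :=
  .cons a (.pi Γ b) (.var Γ b)

end WfSub

mutual

theorem StepTm.wfTm {β : Bool} {Γ : List ℕ} {M₁ M₂ : Tm} :
    StepTm β M₁ M₂ → WfTm Γ M₁ → WfTm Γ M₂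
  | .beta, .app (.lam hM) hN => .clos (.single _ hN) hM
  | .abs, .clos hs (.lam hM) => .lam (.clos (.lift _ hs) hM)
  | .app, .clos hs (.app hM hN) => .app (.clos hs hM) (.clos hs hN)
  | .consVar, .clos (.cons _ _ hN) _ => hN
  | .new hab, .clos (.cons _ hs _) hb => .clos hs ((wfTm_cons_var_iff_of_ne hab).mp hb)
  | .idVar, .clos (.id _) ha => ha
  | .clos, .clos hs (.clos hq hM) => .clos (.comp hs hq) hM
  | .pi1 hab, .clos (.pi _ _) hb => (wfTm_cons_var_iff_of_ne hab).mpr hb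
  | .pi2 hab, .clos (.comp hs (.pi _ _)) hb => .clos hs ((wfTm_cons_var_iff_of_ne hab).mpr hb)
  | .alpha1 _ _, .lam hM => .lam (.clos (.rename _ _ _) hM)
  | .lamCong h, .lam hM => .lam (h.wfTm hM)
  | .appL h, .app hM hN => .app (h.wfTm hM) hN
  | .appR h, .app hM hN => .app hM (h.wfTm hN)
  | .closL h, .clos hs hM => .clos (h.wfSub hs) hM
  | .closR h, .clos hs hM => .clos hs (h.wfTm hM)

theorem StepSub.wfSub {β : Bool} {Γ Δ : List ℕ} {s₁ s₂ : Subst} :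
    StepSub β s₁ s₂ → WfSub Γ s₁ Δ → WfSub Γ s₂ Δ
  | .ass, .comp hs (.comp hq hr) => .comp (.comp hs hq) hr
  | .idR, .comp hs (.id _) => hs
  | .idShift, .comp (.id _) ha => ha
  | .consShift, .comp (.cons _ hs _) (.pi _ _) => hs
  | .map, .comp hs (.cons a hq hN) => .cons a (.comp hs hq) (.clos hs hN)
  | .consL h, .cons a hs hN => .cons a (h.wfSub hs) hN
  | .consR h, .cons a hs hN => .cons a hs (h.wfTm hN)
  | .compL h, .comp hs hq => .comp (h.wfSub hs) hq
  | .compR h, .comp hs hq => .comp hs (h.wfSub hq)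

end

theorem subject_reduction_one_general (β : Bool) :
    (∀ (Γ : List ℕ) (M₁ M₂ : Tm), WfTm Γ M₁ → StepTm β M₁ M₂ → WfTm Γ M₂) ∧
    (∀ (Γ Δ : List ℕ) (s₁ s₂ : Subst), WfSub Γ s₁ Δ → StepSub β s₁ s₂ → WfSub Γ s₂ Δ) :=
  ⟨fun _ _ _ hM h => h.wfTm hM, fun _ _ _ _ hs h => h.wfSub hs⟩

/-- Subject reduction, part one, for one-step λπ-reduction. -/
theorem subject_reduction_one :
    (∀ (Γ : List ℕ) (M₁ M₂ : Tm), WfTm Γ M₁ → StepTm true M₁ M₂ → WfTm Γ M₂) ∧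
    (∀ (Γ Δ : List ℕ) (s₁ s₂ : Subst), WfSub Γ s₁ Δ → StepSub true s₁ s₂ → WfSub Γ s₂ Δ) :=
  subject_reduction_one_general true
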